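/- arXiv:2510.03201 — 7 statements merged into one kernel-verified Lean document; each statement's English description precedes it below -/
import Mathlib

section
/- Let v be a nonincreasing classical solution of the cascade of moving-boundary PDEs. Then for every nonempty I ⊆ [N] and every (t,x) ∈ [0,T]×ℝ^I: (i) for each i ∈ [N], the value v^{I∖ℓ,i}_t(x^{−ℓ}) is the same for all ℓ ∈ ℐ^I v(t,x); (ii) for every i ∈ I and every J ⊆ I, v^{J,i}_t(x^J) ≥ v^{I,i}_t(x). -/
open Set Filter
open scoped Topology

variable (N : ℕ) (T σ : ℝ) (D : Fin N → Fin N → ℝ)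

/-- The boundary level `Σ_j D_{ij} v^{I∖i,j}_t(x^{−i})` felt by particle `i` in configuration `I`.
Functions `v^{I,i} : [0,T]×ℝ^I → ℝ` are represented as functions on `ℝ × (Fin N → ℝ)` that only
depend on the coordinates in `I`. -/
def bdrySum (v : Finset (Fin N) → Fin N → ℝ → (Fin N → ℝ) → ℝ) (I : Finset (Fin N))
    (i : Fin N) (t : ℝ) (x : Fin N → ℝ) : ℝ :=
  ∑ j, D i j * v (I.erase i) j t x

/-- The domain `𝒟^I_T v` where all particles of the configuration `I` are alive. -/
def domT (v : Finset (Fin N) → Fin N → ℝ → (Fin N → ℝ) → ℝ) (I : Finset (Fin N)) :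
    Set (ℝ × (Fin N → ℝ)) :=
  {p | p.1 ∈ Set.Icc 0 T ∧ ∀ i ∈ I, bdrySum N D v I i p.1 p.2 < p.2 i}

/-- The domain `𝒟^I v = 𝒟^I_T v ∖ ({T}×ℝ^I)`. -/
def dom (v : Finset (Fin N) → Fin N → ℝ → (Fin N → ℝ) → ℝ) (I : Finset (Fin N)) :
    Set (ℝ × (Fin N → ℝ)) :=
  domT N T D v I ∩ {p | p.1 < T}

/-- The index set `ℐ^I v(t,x)` of killed particles. -/
noncomputable def killedSet (v : Finset (Fin N) → Fin N → ℝ → (Fin N → ℝ) → ℝ)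
    (I : Finset (Fin N)) (t : ℝ) (x : Fin N → ℝ) : Finset (Fin N) :=
  I.filter fun i => x i ≤ bdrySum N D v I i t x

/-- The boundary function `ℱ^I_i v(t,x) = v^{I∖i₀,i}_t(x^{−i₀})`, where `i₀` is the minimal
index of `ℐ^I v(t,x)` (junk value `v^{I,i}_t(x)` if no particle is killed). -/
noncomputable def bdryFun (v : Finset (Fin N) → Fin N → ℝ → (Fin N → ℝ) → ℝ)
    (I : Finset (Fin N)) (i : Fin N) (t : ℝ) (x : Fin N → ℝ) : ℝ :=
  if h : (killedSet N D v I t x).Nonempty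
  then v (I.erase ((killedSet N D v I t x).min' h)) i t x
  else v I i t x

/-- `f` is `C^{1,2}` on `U` (with spatial variables ranging over the coordinates of `I`)
and solves the backward heat equation `∂_t f + (σ²/2) Δ f = 0` there. -/
def SolvesHeatOn (I : Finset (Fin N)) (f : ℝ → (Fin N → ℝ) → ℝ)
    (U : Set (ℝ × (Fin N → ℝ))) : Prop :=
  ∃ (ft : ℝ → (Fin N → ℝ) → ℝ) (fx fxx : ℝ → (Fin N → ℝ) → Fin N → ℝ),
    (∀ p ∈ U, HasDerivWithinAt (fun s => f s p.2) (ft p.1 p.2) (Set.Icc 0 T) p.1) ∧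
    (∀ p ∈ U, ∀ j ∈ I,
      HasDerivAt (fun y => f p.1 (Function.update p.2 j y)) (fx p.1 p.2 j) (p.2 j)) ∧
    (∀ p ∈ U, ∀ j ∈ I,
      HasDerivAt (fun y => fx p.1 (Function.update p.2 j y) j) (fxx p.1 p.2 j) (p.2 j)) ∧
    ContinuousOn (fun p : ℝ × (Fin N → ℝ) => ft p.1 p.2) U ∧
    (∀ j ∈ I, ContinuousOn (fun p : ℝ × (Fin N → ℝ) => fx p.1 p.2 j) U) ∧
    (∀ j ∈ I, ContinuousOn (fun p : ℝ × (Fin N → ℝ) => fxx p.1 p.2 j) U) ∧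
    (∀ p ∈ U, ft p.1 p.2 + σ ^ 2 / 2 * ∑ j ∈ I, fxx p.1 p.2 j = 0)

/-- `v` is a classical solution of the cascade of moving boundary PDEs. -/
def IsClassicalSolution (v : Finset (Fin N) → Fin N → ℝ → (Fin N → ℝ) → ℝ) : Prop :=
  ∀ I : Finset (Fin N),
    (∀ i : Fin N, ∀ t ∈ Set.Icc (0 : ℝ) T, ∀ x y : Fin N → ℝ,
      (∀ j ∈ I, x j = y j) → v I i t x = v I i t y) ∧
    (∀ i ∉ I, ∀ t ∈ Set.Icc (0 : ℝ) T, ∀ x : Fin N → ℝ, v I i t x = 1) ∧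
    ∀ i ∈ I,
      (∃ U : Set (ℝ × (Fin N → ℝ)), IsOpen U ∧
        dom N T D v I = U ∩ {p : ℝ × (Fin N → ℝ) | p.1 ∈ Set.Ico 0 T}) ∧
      SolvesHeatOn N T σ I (v I i) (dom N T D v I) ∧
      (∃ C : ℝ, ∀ t ∈ Set.Ico (0 : ℝ) T, ∀ x : Fin N → ℝ, |v I i t x| ≤ C) ∧
      ContinuousOn (fun p : ℝ × (Fin N → ℝ) => v I i p.1 p.2)
        {p : ℝ × (Fin N → ℝ) | p.1 ∈ Set.Ico 0 T} ∧
      (∀ t ∈ Set.Icc (0 : ℝ) T, ∀ x : Fin N → ℝ, (t, x) ∉ domT N T D v I →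
        v I i t x = bdryFun N D v I i t x) ∧
      (∀ x : Fin N → ℝ, (T, x) ∈ domT N T D v I → v I i T x = 0) ∧
      (∀ K : Set (Fin N → ℝ), IsCompact K → ({T} ×ˢ K ⊆ domT N T D v I) →
        Tendsto (fun t => sSup ((fun x => |v I i t x - v I i T x|) '' K)) (𝓝[<] T) (𝓝 0))

/-- A classical solution is nonincreasing if it is jointly nonincreasing in time and
(componentwise, over the coordinates of `I`) in space. -/
def IsNonincreasingSol (v : Finset (Fin N) → Fin N → ℝ → (Fin N → ℝ) → ℝ) : Prop :=
  ∀ I : Finset (Fin N), ∀ i ∈ I, ∀ s t : ℝ, ∀ x y : Fin N → ℝ,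
    s ∈ Set.Icc (0 : ℝ) T → t ∈ Set.Icc (0 : ℝ) T → s ≤ t → (∀ j ∈ I, y j ≤ x j) →
    v I i t x ≤ v I i s y

/-- If a killed particle exists and the boundary value is independent of the killed index, then
the boundary condition can be read off at any killed index. -/
theorem eq_erase_of_killed (v : Finset (Fin N) → Fin N → ℝ → (Fin N → ℝ) → ℝ)
    (hv : IsClassicalSolution N T σ D v) (I : Finset (Fin N))
    (t : ℝ) (ht : t ∈ Set.Icc (0 : ℝ) T) (x : Fin N → ℝ)
    (h1 : ∀ i : Fin N, ∀ l₁ ∈ killedSet N D v I t x, ∀ l₂ ∈ killedSet N D v I t x,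
      v (I.erase l₁) i t x = v (I.erase l₂) i t x)
    (l : Fin N) (hl : l ∈ killedSet N D v I t x) (i : Fin N) :
    v I i t x = v (I.erase l) i t x := by
  by_cases hi : i ∈ I
  · obtain ⟨-, -, -, -, hb, -, -⟩ := (hv I).2.2 i hi
    have hnot : (t, x) ∉ domT N T D v I := by
      intro h
      have hl' := Finset.mem_filter.1 hl
      exact absurd (h.2 l hl'.1) (not_lt.2 hl'.2)
    rw [hb t ht x hnot, bdryFun, dif_pos ⟨l, hl⟩]
    exact h1 i _ (Finset.min'_mem _ _) l hl
  · rw [(hv I).2.1 i hi t ht x,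
      (hv (I.erase l)).2.1 i (fun h => hi (Finset.mem_of_mem_erase h)) t ht x]

theorem level_induction (hD : ∀ i j, 0 ≤ D i j)
    (v : Finset (Fin N) → Fin N → ℝ → (Fin N → ℝ) → ℝ)
    (hv : IsClassicalSolution N T σ D v) (hmono : IsNonincreasingSol N T v)
    (t : ℝ) (ht : t ∈ Set.Icc (0 : ℝ) T) (I : Finset (Fin N)) : ∀ x : Fin N → ℝ,
    (∀ i : Fin N, ∀ l₁ ∈ killedSet N D v I t x, ∀ l₂ ∈ killedSet N D v I t x,
      v (I.erase l₁) i t x = v (I.erase l₂) i t x) ∧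
    (∀ i : Fin N, ∀ J ⊆ I, v I i t x ≤ v J i t x) := by
  induction I using Finset.strongInduction with
  | H I ih =>
    -- a killed index stays killed after removing another one
    have key : ∀ x : Fin N → ℝ, ∀ l₁ ∈ killedSet N D v I t x, ∀ l₂ ∈ killedSet N D v I t x,
        l₁ ≠ l₂ → l₂ ∈ killedSet N D v (I.erase l₁) t x := by
      intro x l₁ h₁ l₂ h₂ hne
      have h₁' := Finset.mem_filter.1 h₁
      have h₂' := Finset.mem_filter.1 h₂
      refine Finset.mem_filter.2 ⟨Finset.mem_erase.2 ⟨hne.symm, h₂'.1⟩, h₂'.2.trans ?_⟩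
      refine Finset.sum_le_sum fun j _ => mul_le_mul_of_nonneg_left ?_ (hD _ _)
      rw [Finset.erase_right_comm]
      exact (ih _ (Finset.erase_ssubset h₂'.1) x).2 j _ (Finset.erase_subset _ _)
    have P1 : ∀ x : Fin N → ℝ, ∀ i : Fin N, ∀ l₁ ∈ killedSet N D v I t x,
        ∀ l₂ ∈ killedSet N D v I t x, v (I.erase l₁) i t x = v (I.erase l₂) i t x := by
      intro x i l₁ h₁ l₂ h₂
      by_cases hne : l₁ = l₂
      · rw [hne]
      have h₁' := Finset.mem_filter.1 h₁
      have h₂' := Finset.mem_filter.1 h₂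
      rw [eq_erase_of_killed N T σ D v hv _ t ht x (ih _ (Finset.erase_ssubset h₁'.1) x).1 l₂
          (key x l₁ h₁ l₂ h₂ hne) i,
        eq_erase_of_killed N T σ D v hv _ t ht x (ih _ (Finset.erase_ssubset h₂'.1) x).1 l₁
          (key x l₂ h₂ l₁ h₁ (Ne.symm hne)) i, Finset.erase_right_comm]
    have P2 : ∀ x : Fin N → ℝ, ∀ i : Fin N, ∀ l ∈ I, v I i t x ≤ v (I.erase l) i t x := by
      intro x i l hl
      by_cases hi : i ∈ I
      · set y := Function.update x l (min (x l) (bdrySum N D v I l t x)) with hy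
        have hagree : ∀ k, v (I.erase l) k t y = v (I.erase l) k t x := by
          intro k
          refine (hv (I.erase l)).1 k t ht y x fun j hj => ?_
          rw [hy, Function.update_of_ne (Finset.ne_of_mem_erase hj)]
        have hk : l ∈ killedSet N D v I t y := by
          refine Finset.mem_filter.2 ⟨hl, ?_⟩
          have : bdrySum N D v I l t y = bdrySum N D v I l t x := by
            simp only [bdrySum, hagree]
          rw [this, hy, Function.update_self]
          exact min_le_right _ _
        have hle : v I i t x ≤ v I i t y := by
          refine hmono I i hi t t x y ht ht le_rfl fun j _ => ?_
          by_cases hj : j = l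
          · subst hj
            rw [hy, Function.update_self]
            exact min_le_left _ _
          · rw [hy, Function.update_of_ne hj]
        rw [eq_erase_of_killed N T σ D v hv I t ht y (P1 y) l hk i, hagree] at hle
        exact hle
      · rw [(hv I).2.1 i hi t ht x,
          (hv (I.erase l)).2.1 i (fun h => hi (Finset.mem_of_mem_erase h)) t ht x]
    intro x
    refine ⟨P1 x, fun i J hJ => ?_⟩
    by_cases hEq : J = I
    · rw [hEq]
    obtain ⟨l, hl, hlJ⟩ := Finset.exists_of_ssubset (lt_of_le_of_ne hJ hEq)
    exact (P2 x i l hl).trans ((ih _ (Finset.erase_ssubset hl) x).2 i J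
      (Finset.subset_erase.2 ⟨hJ, hlJ⟩))

/-- for a nonincreasing classical solution, (i) the value `v^{I∖ℓ,i}_t(x^{−ℓ})` does
not depend on the choice of killed index `ℓ ∈ ℐ^I v(t,x)`, and (ii) the solution is monotone
between levels: `v^{J,i}_t(x^J) ≥ v^{I,i}_t(x)` for `J ⊆ I`. -/
theorem classicalSolution_bdry_welldefined_and_level_monotone
    (hT : 0 < T) (hσ : 0 < σ) (hD : ∀ i j, 0 ≤ D i j)
    (v : Finset (Fin N) → Fin N → ℝ → (Fin N → ℝ) → ℝ)
    (hv : IsClassicalSolution N T σ D v) (hmono : IsNonincreasingSol N T v)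
    (I : Finset (Fin N)) (hI : I.Nonempty)
    (t : ℝ) (ht : t ∈ Set.Icc (0 : ℝ) T) (x : Fin N → ℝ) :
    (∀ i : Fin N, ∀ l₁ ∈ killedSet N D v I t x, ∀ l₂ ∈ killedSet N D v I t x,
      v (I.erase l₁) i t x = v (I.erase l₂) i t x) ∧
    (∀ i ∈ I, ∀ J ⊆ I, v I i t x ≤ v J i t x) := by
  have h := level_induction N T σ D hD v hv hmono t ht I x
  exact ⟨h.1, fun i _ J hJ => h.2 i J hJ⟩
end

section
/- Let v be a nonincreasing classical solution of the cascade of moving-boundary PDEs. Let I ⊆ [N] be nonempty, (t,x) ∈ [0,T]×ℝ^I, and J ⊆ I. Then x_i ≤ Σ_{j=1}^N D_{ij} v^{J,j}_t(x^J) holds for all i ∈ I∖J if and only if I∖J ⊆ ℐ^I v(t,x). In particular, whenever J ⊆ I satisfies I∖J ⊆ ℐ^I v(t,x), one has v^{J,i}_t(x^J) = v^{I,i}_t(x) for all i ∈ I. -/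
open Set Filter
open scoped Topology

variable (N : ℕ) (T σ : ℝ) (D : Fin N → Fin N → ℝ)

theorem cascade_AB (hD : ∀ i j, 0 ≤ D i j)
    (v : Finset (Fin N) → Fin N → ℝ → (Fin N → ℝ) → ℝ)
    (hv : IsClassicalSolution N T σ D v) (hmono : IsNonincreasingSol N T v)
    (t : ℝ) (ht : t ∈ Set.Icc (0 : ℝ) T) (n : ℕ) :
    ∀ I : Finset (Fin N), I.card = n → ∀ k ∈ I, ∀ j : Fin N,
      (∀ x : Fin N → ℝ, x k ≤ bdrySum N D v I k t x → v I j t x = v (I.erase k) j t x) ∧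
      (∀ x : Fin N → ℝ, v I j t x ≤ v (I.erase k) j t x) := by
  induction n with
  | zero =>
    intro I hc k hk
    rw [Finset.card_eq_zero] at hc
    simp [hc] at hk
  | succ n ih =>
    intro I hc k hk
    have hcard : ∀ i ∈ I, (I.erase i).card = n := by
      intro i hi
      rw [Finset.card_erase_of_mem hi, hc]; rfl
    -- transfer of killing
    have trans : ∀ x : Fin N → ℝ, ∀ a ∈ I, ∀ b ∈ I, a ≠ b → x a ≤ bdrySum N D v I a t x →
        x a ≤ bdrySum N D v (I.erase b) a t x := by
      intro x a ha b hb hab h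
      refine h.trans ?_
      unfold bdrySum
      refine Finset.sum_le_sum fun j _ => mul_le_mul_of_nonneg_left ?_ (hD a j)
      have := (ih (I.erase a) (hcard a ha) b (Finset.mem_erase.2 ⟨hab.symm, hb⟩) j).2 x
      rwa [Finset.erase_right_comm] at this
    have A : ∀ k ∈ I, ∀ j : Fin N, ∀ x : Fin N → ℝ, x k ≤ bdrySum N D v I k t x →
        v I j t x = v (I.erase k) j t x := by
      intro k hk j x hx
      by_cases hj : j ∈ I
      · have hkm : k ∈ killedSet N D v I t x := Finset.mem_filter.2 ⟨hk, hx⟩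
        have hne : (killedSet N D v I t x).Nonempty := ⟨k, hkm⟩
        have hnd : (t, x) ∉ domT N T D v I := fun h => absurd (h.2 k hk) (not_lt.2 hx)
        have e := ((hv I).2.2 j hj).2.2.2.2.1 t ht x hnd
        rw [bdryFun, dif_pos hne] at e
        have hm := Finset.min'_mem _ hne
        generalize (killedSet N D v I t x).min' hne = m at e hm
        obtain ⟨hmI, hmx⟩ := Finset.mem_filter.1 hm
        by_cases hkm : k = m
        · rw [hkm]; exact e
        · have h1 := (ih (I.erase m) (hcard m hmI) k (Finset.mem_erase.2 ⟨hkm, hk⟩) j).1 x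
            (trans x k hk m hmI hkm hx)
          have h2 := (ih (I.erase k) (hcard k hk) m
            (Finset.mem_erase.2 ⟨Ne.symm hkm, hmI⟩) j).1 x
            (trans x m hmI k hk (Ne.symm hkm) hmx)
          rw [e, h1, h2, Finset.erase_right_comm]
      · rw [(hv I).2.1 j hj t ht x,
          (hv (I.erase k)).2.1 j (fun h => hj (Finset.mem_of_mem_erase h)) t ht x]
    intro j
    refine ⟨A k hk j, fun x => ?_⟩
    by_cases hj : j ∈ I
    · let y : Fin N → ℝ := Function.update x k (min (x k) (bdrySum N D v I k t x))
      have hxy : ∀ l, v (I.erase k) l t y = v (I.erase k) l t x := fun l =>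
        (hv (I.erase k)).1 l t ht y x fun i hi => by
          simp [y, Function.update_of_ne (Finset.ne_of_mem_erase hi)]
      have hb : bdrySum N D v I k t y = bdrySum N D v I k t x := by
        unfold bdrySum
        exact Finset.sum_congr rfl fun l _ => by rw [hxy l]
      have hy : y k ≤ bdrySum N D v I k t y := by
        rw [hb]; simp [y]
      rw [← hxy j, ← A k hk j y hy]
      refine hmono I j hj t t x y ht ht le_rfl fun i _ => ?_
      by_cases hik : i = k
      · subst hik; simp [y]
      · simp [y, Function.update_of_ne hik]
    · rw [(hv I).2.1 j hj t ht x,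
          (hv (I.erase k)).2.1 j (fun h => hj (Finset.mem_of_mem_erase h)) t ht x]

theorem cascade_multi (hD : ∀ i j, 0 ≤ D i j)
    (v : Finset (Fin N) → Fin N → ℝ → (Fin N → ℝ) → ℝ)
    (hv : IsClassicalSolution N T σ D v) (hmono : IsNonincreasingSol N T v)
    (t : ℝ) (ht : t ∈ Set.Icc (0 : ℝ) T) (x : Fin N → ℝ) (J : Finset (Fin N)) (n : ℕ) :
    ∀ I : Finset (Fin N), I.card = n → J ⊆ I →
      (∀ j, v I j t x ≤ v J j t x) ∧
      ((∀ i ∈ I \ J, x i ≤ ∑ j, D i j * v J j t x) → I \ J ⊆ killedSet N D v I t x) ∧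
      (I \ J ⊆ killedSet N D v I t x → ∀ i, v J i t x = v I i t x) := by
  have AB := cascade_AB N T σ D hD v hv hmono t ht
  induction n with
  | zero =>
    intro I hc hJ
    rw [Finset.card_eq_zero] at hc
    subst hc
    have hJ' : J = ∅ := Finset.subset_empty.1 hJ
    subst hJ'
    simp
  | succ n ih =>
    intro I hc hJ
    have hcard : ∀ i ∈ I, (I.erase i).card = n := by
      intro i hi
      rw [Finset.card_erase_of_mem hi, hc]; rfl
    by_cases hIJ : I = J
    · subst hIJ; simp
    have hsub : ∀ k ∈ I \ J, J ⊆ I.erase k := fun k hk =>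
      Finset.subset_erase.2 ⟨hJ, (Finset.mem_sdiff.1 hk).2⟩
    obtain ⟨k, hk⟩ : (I \ J).Nonempty :=
      Finset.sdiff_nonempty.2 fun h => hIJ (Finset.Subset.antisymm h hJ)
    have hkI := (Finset.mem_sdiff.1 hk).1
    refine ⟨fun j => ((AB _ I rfl k hkI j).2 x).trans
      ((ih (I.erase k) (hcard k hkI) (hsub k hk)).1 j), ?_, ?_⟩
    · intro h i hi
      have hiI := (Finset.mem_sdiff.1 hi).1
      refine Finset.mem_filter.2 ⟨hiI, ?_⟩
      have h3 := ih (I.erase i) (hcard i hiI) (hsub i hi)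
      have h4 := h3.2.2 (h3.2.1 fun l hl => h l (Finset.mem_sdiff.2
        ⟨Finset.mem_of_mem_erase (Finset.mem_sdiff.1 hl).1, (Finset.mem_sdiff.1 hl).2⟩))
      refine (h i hi).trans (le_of_eq ?_)
      unfold bdrySum
      exact Finset.sum_congr rfl fun j _ => by rw [h4 j]
    · intro h i
      have h3 := ih (I.erase k) (hcard k hkI) (hsub k hk)
      rw [(AB _ I rfl k hkI i).1 x (Finset.mem_filter.1 (h hk)).2]
      refine h3.2.2 (h3.2.1 fun l hl => ?_) i
      have hl' : l ∈ I \ J := Finset.mem_sdiff.2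
        ⟨Finset.mem_of_mem_erase (Finset.mem_sdiff.1 hl).1, (Finset.mem_sdiff.1 hl).2⟩
      have hlI := (Finset.mem_sdiff.1 hl').1
      refine (Finset.mem_filter.1 (h hl')).2.trans ?_
      unfold bdrySum
      exact Finset.sum_le_sum fun j _ => mul_le_mul_of_nonneg_left
        ((ih (I.erase l) (hcard l hlI) (hsub l hl')).1 j) (hD l j)

/-- a set `I∖J` of particles is simultaneously killed if and only if each of them is
below the boundary level computed from the reduced configuration `J`; in that case the solution
at level `J` agrees with the solution at level `I`. -/
theorem classicalSolution_multiple_killings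
    (hT : 0 < T) (hσ : 0 < σ) (hD : ∀ i j, 0 ≤ D i j)
    (v : Finset (Fin N) → Fin N → ℝ → (Fin N → ℝ) → ℝ)
    (hv : IsClassicalSolution N T σ D v) (hmono : IsNonincreasingSol N T v)
    (I : Finset (Fin N)) (hI : I.Nonempty)
    (t : ℝ) (ht : t ∈ Set.Icc (0 : ℝ) T) (x : Fin N → ℝ)
    (J : Finset (Fin N)) (hJ : J ⊆ I) :
    ((∀ i ∈ I \ J, x i ≤ ∑ j, D i j * v J j t x) ↔ I \ J ⊆ killedSet N D v I t x) ∧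
    (I \ J ⊆ killedSet N D v I t x → ∀ i ∈ I, v J i t x = v I i t x) := by
  have M := cascade_multi N T σ D hD v hv hmono t ht x J
  have h := M _ I rfl hJ
  refine ⟨⟨h.2.1, fun hk i hi => ?_⟩, fun hk i _ => h.2.2 hk i⟩
  refine (Finset.mem_filter.1 (hk hi)).2.trans ?_
  unfold bdrySum
  exact Finset.sum_le_sum fun j _ => mul_le_mul_of_nonneg_left
    ((M _ (I.erase i) rfl (Finset.subset_erase.2 ⟨hJ, (Finset.mem_sdiff.1 hi).2⟩)).1 j) (hD i j)
end

section
/- Let v be a nonincreasing classical solution of the cascade of moving-boundary PDEs. Then for every nonempty I ⊆ [N] and every (t,x) ∈ [0,T]×ℝ^I, the set I ∖ ℐ^I v(t,x) equals the union over all subsets J ⊆ I such that (t, x^J) ∈ 𝒟^J_T v. -/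
open Set Filter
open scoped Topology

variable (N : ℕ) (T σ : ℝ) (D : Fin N → Fin N → ℝ)

section AliveSetHelpers

variable {N : ℕ} {T σ : ℝ} {D : Fin N → Fin N → ℝ}

/-- Comparison of boundary levels from comparison of the values. -/
theorem bdrySum_le_of_le (hD : ∀ i j, 0 ≤ D i j)
    {v : Finset (Fin N) → Fin N → ℝ → (Fin N → ℝ) → ℝ} {A B : Finset (Fin N)} {i : Fin N}
    {t : ℝ} {x : Fin N → ℝ} (h : ∀ j, v (A.erase i) j t x ≤ v (B.erase i) j t x) :
    bdrySum N D v A i t x ≤ bdrySum N D v B i t x :=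
  Finset.sum_le_sum fun j _ => mul_le_mul_of_nonneg_left (h j) (hD i j)

/-- Removing any killed particle does not change the values, and removing any particle
increases them. -/
theorem consistency_and_mono (hD : ∀ i j, 0 ≤ D i j)
    {v : Finset (Fin N) → Fin N → ℝ → (Fin N → ℝ) → ℝ}
    (hv : IsClassicalSolution N T σ D v) (hmono : IsNonincreasingSol N T v)
    {t : ℝ} (ht : t ∈ Set.Icc (0 : ℝ) T) (I : Finset (Fin N)) :
    (∀ x, ∀ k ∈ killedSet N D v I t x, ∀ j, v I j t x = v (I.erase k) j t x) ∧
    (∀ x k j, v I j t x ≤ v (I.erase k) j t x) := by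
  induction I using Finset.strongInduction with
  | H I ih =>
  have cons : ∀ x, ∀ k ∈ killedSet N D v I t x, ∀ j, v I j t x = v (I.erase k) j t x := by
    intro x k hk j
    have hkI : k ∈ I := (Finset.mem_filter.1 hk).1
    by_cases hj : j ∈ I
    swap
    · rw [(hv I).2.1 j hj t ht x,
        (hv (I.erase k)).2.1 j (fun h => hj (Finset.mem_of_mem_erase h)) t ht x]
    have hne : (killedSet N D v I t x).Nonempty := ⟨k, hk⟩
    have hdom : (t, x) ∉ domT N T D v I := by
      intro h
      exact absurd (h.2 k hkI) (not_lt.2 (Finset.mem_filter.1 hk).2)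
    have hval := ((hv I).2.2 j hj).2.2.2.2.1 t ht x hdom
    rw [bdryFun, dif_pos hne] at hval
    set m := (killedSet N D v I t x).min' hne with hm
    have hmk : m ∈ killedSet N D v I t x := Finset.min'_mem _ _
    have hmI : m ∈ I := (Finset.mem_filter.1 hmk).1
    by_cases hmk' : m = k
    · rw [hval, hmk']
    have key : ∀ a b, a ∈ killedSet N D v I t x → b ∈ I → a ≠ b →
        v (I.erase b) j t x = v ((I.erase b).erase a) j t x := by
      intro a b ha hb hab
      have haI := (Finset.mem_filter.1 ha).1
      refine (ih _ (Finset.erase_ssubset hb)).1 x a ?_ j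
      refine Finset.mem_filter.2 ⟨Finset.mem_erase.2 ⟨hab, haI⟩,
        (Finset.mem_filter.1 ha).2.trans (bdrySum_le_of_le hD fun l => ?_)⟩
      rw [Finset.erase_right_comm]
      exact (ih _ (Finset.erase_ssubset haI)).2 x b l
    rw [hval, key k m hk hmI (Ne.symm hmk'), key m k hmk hkI hmk', Finset.erase_right_comm]
  refine ⟨cons, ?_⟩
  intro x k j
  by_cases hk : k ∈ I
  swap
  · rw [Finset.erase_eq_of_notMem hk]
  by_cases hj : j ∈ I
  swap
  · rw [(hv I).2.1 j hj t ht x,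
      (hv (I.erase k)).2.1 j (fun h => hj (Finset.mem_of_mem_erase h)) t ht x]
  set y := Function.update x k (min (x k) (bdrySum N D v I k t x)) with hy
  have hagree : ∀ l ∈ I.erase k, y l = x l := fun l hl => by
    rw [hy, Function.update_of_ne (Finset.ne_of_mem_erase hl)]
  have hb : bdrySum N D v I k t y = bdrySum N D v I k t x := by
    refine Finset.sum_congr rfl fun l _ => ?_
    rw [(hv (I.erase k)).1 l t ht y x hagree]
  have hky : k ∈ killedSet N D v I t y := by
    refine Finset.mem_filter.2 ⟨hk, ?_⟩
    rw [hb, hy, Function.update_self]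
    exact min_le_right _ _
  calc v I j t x ≤ v I j t y := by
        refine hmono I j hj t t x y ht ht le_rfl fun l hl => ?_
        by_cases hlk : l = k
        · subst hlk
          rw [hy, Function.update_self]
          exact min_le_left _ _
        · exact (hagree l (Finset.mem_erase.2 ⟨hlk, hl⟩)).le
    _ = v (I.erase k) j t y := cons y k hky j
    _ = v (I.erase k) j t x := (hv (I.erase k)).1 j t ht y x hagree

/-- The values are nonincreasing in the configuration. -/
theorem config_mono (hD : ∀ i j, 0 ≤ D i j)
    {v : Finset (Fin N) → Fin N → ℝ → (Fin N → ℝ) → ℝ}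
    (hv : IsClassicalSolution N T σ D v) (hmono : IsNonincreasingSol N T v)
    {t : ℝ} (ht : t ∈ Set.Icc (0 : ℝ) T) (I J : Finset (Fin N)) (hJ : J ⊆ I)
    (x : Fin N → ℝ) (j : Fin N) : v I j t x ≤ v J j t x := by
  induction I using Finset.strongInduction with
  | H I ih =>
  rcases hJ.eq_or_ssubset with h | h
  · rw [h]
  · obtain ⟨k, hkI, hkJ⟩ := Finset.exists_of_ssubset h
    exact ((consistency_and_mono hD hv hmono ht I).2 x k j).trans
      (ih _ (Finset.erase_ssubset hkI) (Finset.subset_erase.2 ⟨hJ, hkJ⟩))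

/-- Every alive particle belongs to an alive subconfiguration. -/
theorem exists_alive_subconfig (hD : ∀ i j, 0 ≤ D i j)
    {v : Finset (Fin N) → Fin N → ℝ → (Fin N → ℝ) → ℝ}
    (hv : IsClassicalSolution N T σ D v) (hmono : IsNonincreasingSol N T v)
    {t : ℝ} (ht : t ∈ Set.Icc (0 : ℝ) T) (x : Fin N → ℝ) (i : Fin N) (I : Finset (Fin N))
    (hi : i ∈ I) (hal : bdrySum N D v I i t x < x i) :
    ∃ J ⊆ I, (t, x) ∈ domT N T D v J ∧ i ∈ J := by
  induction I using Finset.strongInduction with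
  | H I ih =>
  by_cases hdom : (t, x) ∈ domT N T D v I
  · exact ⟨I, Finset.Subset.refl _, hdom, hi⟩
  have hex : ∃ k ∈ I, x k ≤ bdrySum N D v I k t x := by
    by_contra hcon
    push Not at hcon
    exact hdom ⟨ht, hcon⟩
  obtain ⟨k, hkI, hk⟩ := hex
  have hik : i ≠ k := by
    rintro rfl
    exact absurd hal (not_lt.2 hk)
  have hkill : k ∈ killedSet N D v (I.erase i) t x := by
    refine Finset.mem_filter.2 ⟨Finset.mem_erase.2 ⟨Ne.symm hik, hkI⟩,
      hk.trans (bdrySum_le_of_le hD fun l => ?_)⟩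
    rw [Finset.erase_right_comm]
    exact (consistency_and_mono hD hv hmono ht _).2 x i l
  have hle : bdrySum N D v (I.erase k) i t x ≤ bdrySum N D v I i t x := by
    refine bdrySum_le_of_le hD fun l => ?_
    rw [Finset.erase_right_comm]
    exact ((consistency_and_mono hD hv hmono ht _).1 x k hkill l).ge
  obtain ⟨J, hJ, h1, h2⟩ := ih _ (Finset.erase_ssubset hkI) (Finset.mem_erase.2 ⟨hik, hi⟩)
    (hle.trans_lt hal)
  exact ⟨J, hJ.trans (Finset.erase_subset _ _), h1, h2⟩

end AliveSetHelpers

/-- the set of particles of `I` that are still alive at `(t,x)` is the union of all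
subconfigurations `J ⊆ I` for which `(t,x^J)` belongs to the domain `𝒟^J_T v`. -/
theorem classicalSolution_alive_set_eq_union_of_alive_subconfigurations
    (hT : 0 < T) (hσ : 0 < σ) (hD : ∀ i j, 0 ≤ D i j)
    (v : Finset (Fin N) → Fin N → ℝ → (Fin N → ℝ) → ℝ)
    (hv : IsClassicalSolution N T σ D v) (hmono : IsNonincreasingSol N T v)
    (I : Finset (Fin N)) (hI : I.Nonempty)
    (t : ℝ) (ht : t ∈ Set.Icc (0 : ℝ) T) (x : Fin N → ℝ) :
    (↑(I \ killedSet N D v I t x) : Set (Fin N)) =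
      ⋃ (J : Finset (Fin N)) (_ : J ⊆ I) (_ : (t, x) ∈ domT N T D v J),
        (↑J : Set (Fin N)) := by
  ext i
  simp only [Finset.coe_sdiff, Set.mem_diff, Finset.mem_coe, Set.mem_iUnion, killedSet,
    Finset.mem_filter, not_and, not_le, exists_prop]
  constructor
  · rintro ⟨hi, hal⟩
    exact exists_alive_subconfig hD hv hmono ht x i I hi (hal hi)
  · rintro ⟨J, hJ, hdom, hi⟩
    refine ⟨hJ hi, fun _ => lt_of_le_of_lt (bdrySum_le_of_le hD fun l => ?_) (hdom.2 i hi)⟩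
    exact config_mono hD hv hmono ht _ _ (Finset.erase_subset_erase i hJ) x l
end

section
/- Let v be a nonincreasing classical solution of the cascade of moving-boundary PDEs. Then for every I ⊆ [N], every i ∈ I, and every x ∈ ℝ^I, the terminal value satisfies v^{I,i}_T(x) = 1 if i ∈ ℐ^I v(T,x) and v^{I,i}_T(x) = 0 otherwise. -/
open Set Filter
open scoped Topology

variable (N : ℕ) (T σ : ℝ) (D : Fin N → Fin N → ℝ)

/-- `A` is a self-consistent set of dead particles, containing all particles outside `I`. -/
def selfCons {N : ℕ} (D : Fin N → Fin N → ℝ) (x : Fin N → ℝ) (I A : Finset (Fin N)) : Prop :=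
  (∀ j, j ∉ I → j ∈ A) ∧ ∀ i ∈ I, i ∈ A → x i ≤ ∑ j ∈ A, D i j

open Classical in
/-- The greatest self-consistent set. -/
noncomputable def maxDead {N : ℕ} (D : Fin N → Fin N → ℝ) (x : Fin N → ℝ)
    (I : Finset (Fin N)) : Finset (Fin N) :=
  Finset.univ.filter fun i => ∃ A, selfCons D x I A ∧ i ∈ A

theorem selfCons.subset {N : ℕ} {D : Fin N → Fin N → ℝ} {x : Fin N → ℝ}
    {I A : Finset (Fin N)} (h : selfCons D x I A) : A ⊆ maxDead D x I := by
  intro i hi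
  simp only [maxDead, Finset.mem_filter, Finset.mem_univ, true_and]
  exact ⟨A, h, hi⟩

theorem selfCons_maxDead {N : ℕ} {D : Fin N → Fin N → ℝ} (hD : ∀ i j, 0 ≤ D i j)
    (x : Fin N → ℝ) (I : Finset (Fin N)) : selfCons D x I (maxDead D x I) := by
  constructor
  · intro j hj
    have h : selfCons D x I Iᶜ :=
      ⟨fun j hj => Finset.mem_compl.2 hj, fun i hi hi' => absurd hi (Finset.mem_compl.1 hi')⟩
    exact h.subset (Finset.mem_compl.2 hj)
  · intro i hi hiG
    have hiG' := hiG
    simp only [maxDead, Finset.mem_filter, Finset.mem_univ, true_and] at hiG'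
    obtain ⟨A, hA, hiA⟩ := hiG'
    exact (hA.2 i hi hiA).trans
      (Finset.sum_le_sum_of_subset_of_nonneg hA.subset fun j _ _ => hD i j)

theorem selfCons_erase {N : ℕ} {D : Fin N → Fin N → ℝ} (hD : ∀ i j, 0 ≤ D i j)
    {x : Fin N → ℝ} {I : Finset (Fin N)} {i : Fin N} (hiG : i ∈ maxDead D x I) :
    maxDead D x I ⊆ maxDead D x (I.erase i) := by
  apply selfCons.subset
  have h := selfCons_maxDead hD x I
  refine ⟨fun j hj => ?_, fun j hj => h.2 j (Finset.mem_of_mem_erase hj)⟩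
  by_cases hji : j = i
  · rwa [hji]
  · exact h.1 j fun hjI => hj (Finset.mem_erase.2 ⟨hji, hjI⟩)

theorem erase_subset_of_le {N : ℕ} {D : Fin N → Fin N → ℝ} (hD : ∀ i j, 0 ≤ D i j)
    {x : Fin N → ℝ} {I : Finset (Fin N)} {i : Fin N}
    (hx : x i ≤ ∑ j ∈ maxDead D x (I.erase i), D i j) :
    maxDead D x (I.erase i) ⊆ maxDead D x I := by
  apply selfCons.subset
  have h := selfCons_maxDead hD x (I.erase i)
  refine ⟨fun j hj => h.1 j fun h' => hj (Finset.mem_of_mem_erase h'), fun j hj hjG => ?_⟩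
  by_cases hji : j = i
  · rwa [hji]
  · exact h.2 j (Finset.mem_erase.2 ⟨hji, hj⟩) hjG

theorem le_iff_mem_maxDead {N : ℕ} {D : Fin N → Fin N → ℝ} (hD : ∀ i j, 0 ≤ D i j)
    {x : Fin N → ℝ} {I : Finset (Fin N)} {i : Fin N} (hi : i ∈ I) :
    x i ≤ ∑ j ∈ maxDead D x (I.erase i), D i j ↔ i ∈ maxDead D x I := by
  constructor
  · intro hx
    exact erase_subset_of_le hD hx
      ((selfCons_maxDead hD x (I.erase i)).1 i (Finset.notMem_erase i I))
  · intro h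
    exact ((selfCons_maxDead hD x I).2 i hi h).trans
      (Finset.sum_le_sum_of_subset_of_nonneg (selfCons_erase hD h) fun j _ _ => hD i j)

/-- the terminal value of a nonincreasing classical solution is the indicator of
the event that particle `i` is killed at `(T,x)`. -/
theorem classicalSolution_terminal_value
    (hT : 0 < T) (hσ : 0 < σ) (hD : ∀ i j, 0 ≤ D i j)
    (v : Finset (Fin N) → Fin N → ℝ → (Fin N → ℝ) → ℝ)
    (hv : IsClassicalSolution N T σ D v) (hmono : IsNonincreasingSol N T v) :
    ∀ I : Finset (Fin N), ∀ i ∈ I, ∀ x : Fin N → ℝ,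
      v I i T x = if i ∈ killedSet N D v I T x then 1 else 0 := by
  intro I i hi x
  have hTT : T ∈ Set.Icc (0 : ℝ) T := ⟨hT.le, le_rfl⟩
  -- a formula for the boundary sum from a formula for the terminal values
  have sum_eq : ∀ (J : Finset (Fin N)) (k : Fin N),
      (∀ j, v (J.erase k) j T x = if j ∈ maxDead D x (J.erase k) then 1 else 0) →
      bdrySum N D v J k T x = ∑ j ∈ maxDead D x (J.erase k), D k j := by
    intro J k h
    simp [bdrySum, h, Finset.sum_ite_mem]
  have main : ∀ (n : ℕ) (J : Finset (Fin N)), J.card = n → ∀ j,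
      v J j T x = if j ∈ maxDead D x J then 1 else 0 := by
    intro n
    induction n with
    | zero =>
      intro J hJ j
      have hj : j ∉ J := by rw [Finset.card_eq_zero.1 hJ]; simp
      rw [if_pos ((selfCons_maxDead hD x J).1 j hj), (hv J).2.1 j hj T hTT x]
    | succ n ih =>
      intro J hJ j
      by_cases hj : j ∈ J
      swap
      · rw [if_pos ((selfCons_maxDead hD x J).1 j hj), (hv J).2.1 j hj T hTT x]
      have hK : ∀ k ∈ J, (x k ≤ bdrySum N D v J k T x ↔ k ∈ maxDead D x J) := by
        intro k hk
        rw [sum_eq J k (ih _ (by rw [Finset.card_erase_of_mem hk, hJ]; rfl))]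
        exact le_iff_mem_maxDead hD hk
      obtain ⟨-, -, -, -, hb, h0, -⟩ := (hv J).2.2 j hj
      by_cases hne : (killedSet N D v J T x).Nonempty
      · have hmin := Finset.min'_mem _ hne
        have hdom : (T, x) ∉ domT N T D v J := by
          intro h
          have h1 := Finset.mem_filter.1 hmin
          exact absurd h1.2 (not_le.2 (h.2 _ h1.1))
        rw [hb T hTT x hdom, bdryFun, dif_pos hne]
        generalize (killedSet N D v J T x).min' hne = k at hmin
        obtain ⟨hkJ, hk⟩ := Finset.mem_filter.1 hmin
        have hkG := (hK k hkJ).1 hk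
        rw [ih _ (by rw [Finset.card_erase_of_mem hkJ, hJ]; rfl)]
        rw [Finset.Subset.antisymm
          (erase_subset_of_le hD ((le_iff_mem_maxDead hD hkJ).2 hkG)) (selfCons_erase hD hkG)]
      · have hlt : ∀ k ∈ J, bdrySum N D v J k T x < x k := by
          intro k hk
          by_contra hc
          exact hne ⟨k, Finset.mem_filter.2 ⟨hk, not_lt.1 hc⟩⟩
        rw [h0 x ⟨hTT, hlt⟩, if_neg]
        intro hjG
        exact absurd ((hK j hj).2 hjG) (not_le.2 (hlt j hj))
  have hiff : i ∈ killedSet N D v I T x ↔ i ∈ maxDead D x I := by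
    rw [killedSet, Finset.mem_filter, sum_eq I i (main _ _ rfl), le_iff_mem_maxDead hD hi]
    exact and_iff_right hi
  rw [main _ I rfl i]
  simp only [hiff]
end

section
/- Let v be a nonincreasing classical solution of the cascade of moving-boundary PDEs. Then for every I ⊆ [N], every i ∈ I, and every x ∈ ℝ^I, one has lim_{t↗T} v^{I,i}_t(x) = v^{I,i}_T(x). -/
open Set Filter
open scoped Topology

variable (N : ℕ) (T σ : ℝ) (D : Fin N → Fin N → ℝ)

/-- a nonincreasing classical solution attains its terminal value continuously:
`v^{I,i}_t(x) → v^{I,i}_T(x)` as `t ↗ T`. -/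
theorem classicalSolution_continuous_at_terminal_time
    (hT : 0 < T) (hσ : 0 < σ) (hD : ∀ i j, 0 ≤ D i j)
    (v : Finset (Fin N) → Fin N → ℝ → (Fin N → ℝ) → ℝ)
    (hv : IsClassicalSolution N T σ D v) (hmono : IsNonincreasingSol N T v) :
    ∀ I : Finset (Fin N), ∀ i ∈ I, ∀ x : Fin N → ℝ,
      Tendsto (fun t => v I i t x) (𝓝[<] T) (𝓝 (v I i T x)) := by
  have hmem : ∀ᶠ t in 𝓝[<] T, t ∈ Set.Icc (0 : ℝ) T ∧ t < T := by
    filter_upwards [Ioo_mem_nhdsLT hT] with t ht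
    exact ⟨⟨ht.1.le, ht.2.le⟩, ht.2⟩
  have hTT : T ∈ Set.Icc (0 : ℝ) T := ⟨hT.le, le_rfl⟩
  have hout : ∀ I : Finset (Fin N), ∀ i ∉ I, ∀ x : Fin N → ℝ,
      Tendsto (fun t => v I i t x) (𝓝[<] T) (𝓝 (v I i T x)) := by
    intro I i hi x
    refine tendsto_const_nhds.congr' ?_
    filter_upwards [hmem] with t ht
    rw [(hv I).2.1 i hi t ht.1 x, (hv I).2.1 i hi T hTT x]
  have key : ∀ I : Finset (Fin N), ∀ i : Fin N, ∀ x : Fin N → ℝ,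
      Tendsto (fun t => v I i t x) (𝓝[<] T) (𝓝 (v I i T x)) := by
    intro I
    induction I using Finset.strongInduction with
    | H I ih =>
      intro i x
      by_cases hi : i ∈ I
      swap
      · exact hout I i hi x
      obtain ⟨-, -, -, -, hb, -, hc⟩ := (hv I).2.2 i hi
      by_cases hx : (T, x) ∈ domT N T D v I
      · have h := hc {x} isCompact_singleton (by
          rintro ⟨a, b⟩ ⟨ha, hb'⟩
          simp only [Set.mem_singleton_iff] at ha hb'
          subst ha hb'
          exact hx)
        simp only [Set.image_singleton, csSup_singleton] at h
        rw [tendsto_iff_dist_tendsto_zero]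
        simpa [Real.dist_eq] using h
      · have hsum : ∀ k ∈ I, Tendsto (fun t => bdrySum N D v I k t x) (𝓝[<] T)
            (𝓝 (bdrySum N D v I k T x)) := by
          intro k hk
          unfold bdrySum
          refine tendsto_finsetSum _ fun j _ => ?_
          exact (ih _ (Finset.erase_ssubset hk) j x).const_mul _
        have hle : ∀ k, ∀ t ∈ Set.Icc (0 : ℝ) T,
            bdrySum N D v I k T x ≤ bdrySum N D v I k t x := by
          intro k t ht
          unfold bdrySum
          refine Finset.sum_le_sum fun j _ => mul_le_mul_of_nonneg_left ?_ (hD k j)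
          by_cases hj : j ∈ I.erase k
          · exact hmono _ j hj t T x x ht hTT ht.2 fun _ _ => le_rfl
          · rw [(hv _).2.1 j hj t ht x, (hv _).2.1 j hj T hTT x]
        have hne : (killedSet N D v I T x).Nonempty := by
          by_contra hcon
          rw [Finset.not_nonempty_iff_eq_empty] at hcon
          refine hx ⟨hTT, fun k hk => ?_⟩
          by_contra hk'
          have : k ∈ killedSet N D v I T x := Finset.mem_filter.2 ⟨hk, not_lt.1 hk'⟩
          simp [hcon] at this
        have hks : ∀ᶠ t in 𝓝[<] T, killedSet N D v I t x = killedSet N D v I T x := by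
          have hall : ∀ᶠ t in 𝓝[<] T, ∀ k ∈ I, bdrySum N D v I k T x < x k →
              bdrySum N D v I k t x < x k := by
            rw [Filter.eventually_all_finset]
            intro k hk
            by_cases hlt : bdrySum N D v I k T x < x k
            · filter_upwards [(hsum k hk).eventually (gt_mem_nhds hlt)] with t ht _ using ht
            · exact Filter.Eventually.of_forall fun t h => absurd h hlt
          filter_upwards [hall, hmem] with t ht htm
          unfold killedSet
          refine Finset.filter_congr fun k hk => ⟨fun h => ?_, fun h => h.trans (hle k t htm.1)⟩
          by_contra hcon
          exact absurd (ht k hk (not_le.1 hcon)) (not_lt.2 h)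
        have hval : ∀ t ∈ Set.Icc (0 : ℝ) T,
            killedSet N D v I t x = killedSet N D v I T x →
            v I i t x = v (I.erase ((killedSet N D v I T x).min' hne)) i t x := by
          intro t ht hk
          have hmin : (killedSet N D v I T x).min' hne ∈ killedSet N D v I t x := by
            rw [hk]
            exact Finset.min'_mem _ _
          have hnd : (t, x) ∉ domT N T D v I := by
            intro h
            have h1 := Finset.mem_filter.1 hmin
            exact absurd (h.2 _ h1.1) (not_lt.2 h1.2)
          rw [hb t ht x hnd]
          unfold bdryFun
          rw [dif_pos ⟨_, hmin⟩]
          simp only [hk]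
        rw [hval T hTT rfl]
        have hmI : (killedSet N D v I T x).min' hne ∈ I :=
          (Finset.mem_filter.1 (Finset.min'_mem _ hne)).1
        refine (ih _ (Finset.erase_ssubset hmI) i x).congr' ?_
        filter_upwards [hks, hmem] with t ht htm
        exact (hval t htm.1 ht).symm
  exact fun I i _ x => key I i x
end

section
/- Let v be a classical solution of the cascade of moving-boundary PDEs. Then for every nonempty I ⊆ [N], the domain 𝒟^I v is an open subset of [0,T]×ℝ^I. If moreover v is nonincreasing, then 𝒟^I_T v is also an open subset of [0,T]×ℝ^I. -/
open Set Filter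
open scoped Topology

variable (N : ℕ) (T σ : ℝ) (D : Fin N → Fin N → ℝ)

section helpers

variable {N T σ D}
  {v : Finset (Fin N) → Fin N → ℝ → (Fin N → ℝ) → ℝ}

/-- If some particle is killed, `v` reduces to a smaller configuration. -/
lemma kill_eq (hv : IsClassicalSolution N T σ D v) (J : Finset (Fin N)) (t : ℝ)
    (ht : t ∈ Set.Icc 0 T) (x : Fin N → ℝ) (k : Fin N) (hk : k ∈ J)
    (hkx : x k ≤ bdrySum N D v J k t x) :
    ∃ l ∈ J, x l ≤ bdrySum N D v J l t x ∧ ∀ i, v J i t x = v (J.erase l) i t x := by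
  have hne : (killedSet N D v J t x).Nonempty := ⟨k, by simp [killedSet, hk, hkx]⟩
  have hmem := (killedSet N D v J t x).min'_mem hne
  obtain ⟨h1, h2⟩ : (killedSet N D v J t x).min' hne ∈ J ∧
      x ((killedSet N D v J t x).min' hne)
        ≤ bdrySum N D v J ((killedSet N D v J t x).min' hne) t x := by
    have := hmem
    unfold killedSet at this
    exact Finset.mem_filter.1 this
  refine ⟨_, h1, h2, fun i => ?_⟩
  by_cases hi : i ∈ J
  · obtain ⟨-, -, -, -, h, -, -⟩ := (hv J).2.2 i hi
    rw [h t ht x (fun hd => absurd (hd.2 k hk) (not_lt.2 hkx))]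
    simp only [bdryFun, hne, dif_pos]
  · rw [(hv J).2.1 i hi t ht x, (hv _).2.1 i (fun h => hi (Finset.mem_of_mem_erase h)) t ht x]

lemma alive_eq (hT : 0 < T) (hv : IsClassicalSolution N T σ D v) (J : Finset (Fin N))
    (x : Fin N → ℝ) (h : ∀ k ∈ J, bdrySum N D v J k T x < x k) (i : Fin N) (hi : i ∈ J) :
    v J i T x = 0 := by
  obtain ⟨-, -, -, -, -, h6, -⟩ := (hv J).2.2 i hi
  exact h6 x ⟨⟨hT.le, le_rfl⟩, h⟩

lemma nonneg_T (hT : 0 < T) (hv : IsClassicalSolution N T σ D v) (J : Finset (Fin N)) :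
    ∀ (i : Fin N) (x : Fin N → ℝ), 0 ≤ v J i T x := by
  induction J using Finset.strongInduction with
  | H J ih =>
    intro i x
    have hTm : T ∈ Set.Icc 0 T := ⟨hT.le, le_rfl⟩
    by_cases hi : i ∈ J
    · by_cases h : ∀ k ∈ J, bdrySum N D v J k T x < x k
      · exact (alive_eq hT hv J x h i hi).ge
      · push Not at h
        obtain ⟨k, hk, hkx⟩ := h
        obtain ⟨l, hl, -, he⟩ := kill_eq hv J T hTm x k hk hkx
        rw [he]
        exact ih _ (Finset.erase_ssubset hl) i x
    · rw [(hv J).2.1 i hi T hTm x]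
      exact zero_le_one

lemma order_T (hT : 0 < T) (hD : ∀ i j, 0 ≤ D i j) (hv : IsClassicalSolution N T σ D v)
    (x : Fin N → ℝ) (J : Finset (Fin N)) :
    (∀ k ∈ J, ∀ i, v J i T x ≤ v (J.erase k) i T x) ∧
    (∀ k ∈ J, x k ≤ bdrySum N D v J k T x → ∀ i, v J i T x = v (J.erase k) i T x) := by
  induction J using Finset.strongInduction with
  | H J ih =>
    have hTm : T ∈ Set.Icc 0 T := ⟨hT.le, le_rfl⟩
    have key : ∀ k ∈ J, ∀ l ∈ J, k ≠ l → x l ≤ bdrySum N D v J l T x →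
        ∀ i, v (J.erase k) i T x = v ((J.erase k).erase l) i T x := by
      intro k hk l hl hkl hlx
      refine (ih _ (Finset.erase_ssubset hk)).2 l (Finset.mem_erase.2 ⟨hkl.symm, hl⟩) ?_
      refine hlx.trans (Finset.sum_le_sum fun j _ => mul_le_mul_of_nonneg_left ?_ (hD l j))
      rw [Finset.erase_right_comm]
      exact (ih _ (Finset.erase_ssubset hl)).1 k (Finset.mem_erase.2 ⟨hkl, hk⟩) j
    constructor
    · intro k hk i
      by_cases h : ∀ k ∈ J, bdrySum N D v J k T x < x k
      · by_cases hi : i ∈ J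
        · rw [alive_eq hT hv J x h i hi]
          exact nonneg_T hT hv _ i x
        · rw [(hv J).2.1 i hi T hTm x,
            (hv _).2.1 i (fun h => hi (Finset.mem_of_mem_erase h)) T hTm x]
      · push Not at h
        obtain ⟨l, hl, hlx⟩ := h
        obtain ⟨l, hl, hlx, he⟩ := kill_eq hv J T hTm x l hl hlx
        rw [he]
        by_cases hkl : k = l
        · rw [hkl]
        · rw [key k hk l hl hkl hlx i, Finset.erase_right_comm]
          exact (ih _ (Finset.erase_ssubset hl)).1 k (Finset.mem_erase.2 ⟨hkl, hk⟩) i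
    · intro k hk hkx i
      obtain ⟨l, hl, hlx, he⟩ := kill_eq hv J T hTm x k hk hkx
      rw [he]
      by_cases hkl : k = l
      · rw [hkl]
      · rw [key k hk l hl hkl hlx i, key l hl k hk (Ne.symm hkl) hkx i, Finset.erase_right_comm]

lemma nonneg_all (hT : 0 < T) (hv : IsClassicalSolution N T σ D v)
    (hm : IsNonincreasingSol N T v) (J : Finset (Fin N)) (i : Fin N) (t : ℝ)
    (ht : t ∈ Set.Icc 0 T) (x : Fin N → ℝ) : 0 ≤ v J i t x := by
  by_cases hi : i ∈ J
  · exact (nonneg_T hT hv J i x).trans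
      (hm J i hi t T x x ht ⟨hT.le, le_rfl⟩ ht.2 (fun _ _ => le_rfl))
  · rw [(hv J).2.1 i hi t ht x]
    exact zero_le_one

/-- Upper semicontinuity of the boundary sum, given that of the summands. -/
lemma bdrySum_usc (hD : ∀ i j, 0 ≤ D i j) (J : Finset (Fin N)) (k : Fin N)
    (F : Filter (ℝ × (Fin N → ℝ))) (x : Fin N → ℝ)
    (h : ∀ j, ∀ ε > 0, ∀ᶠ p in F, v (J.erase k) j p.1 p.2 < v (J.erase k) j T x + ε)
    (c : ℝ) (hc : bdrySum N D v J k T x < c) :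
    ∀ᶠ p in F, bdrySum N D v J k p.1 p.2 < c := by
  have hS : 0 ≤ ∑ j, D k j := Finset.sum_nonneg fun j _ => hD k j
  set S := ∑ j, D k j with hSd
  set ε := (c - bdrySum N D v J k T x) / (S + 1) with hε
  have hεpos : 0 < ε := div_pos (by linarith) (by linarith)
  have hmul : ε * (S + 1) = c - bdrySum N D v J k T x := div_mul_cancel₀ _ (by linarith)
  have := eventually_all.2 (fun j => h j ε hεpos)
  filter_upwards [this] with p hp
  have : bdrySum N D v J k p.1 p.2 ≤ bdrySum N D v J k T x + S * ε := by
    unfold bdrySum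
    rw [hSd, Finset.sum_mul, ← Finset.sum_add_distrib]
    refine Finset.sum_le_sum fun j _ => ?_
    have := mul_le_mul_of_nonneg_left (hp j).le (hD k j)
    linarith
  nlinarith

lemma usc_T (hT : 0 < T) (hD : ∀ i j, 0 ≤ D i j) (hv : IsClassicalSolution N T σ D v)
    (hm : IsNonincreasingSol N T v) (J : Finset (Fin N)) :
    ∀ (i : Fin N) (x : Fin N → ℝ), ∀ ε > 0,
      ∀ᶠ p in 𝓝[{p : ℝ × (Fin N → ℝ) | p.1 ∈ Set.Icc 0 T}] (T, x),
        v J i p.1 p.2 < v J i T x + ε := by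
  induction J using Finset.strongInduction with
  | H J ih =>
    intro i x ε hε
    have hTm : T ∈ Set.Icc 0 T := ⟨hT.le, le_rfl⟩
    have hstrip : ∀ x, ∀ᶠ p in 𝓝[{p : ℝ × (Fin N → ℝ) | p.1 ∈ Set.Icc 0 T}] (T, x),
        p.1 ∈ Set.Icc 0 T := fun x => eventually_mem_nhdsWithin
    by_cases hi : i ∉ J
    · filter_upwards [hstrip x] with p hp
      rw [(hv J).2.1 i hi _ hp, (hv J).2.1 i hi _ hTm]
      linarith
    push Not at hi
    have hb : ∀ x, ∀ k ∈ J, bdrySum N D v J k T x < x k →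
        ∀ᶠ p in 𝓝[{p : ℝ × (Fin N → ℝ) | p.1 ∈ Set.Icc 0 T}] (T, x),
          bdrySum N D v J k p.1 p.2 < p.2 k := by
      intro x k hk hkx
      obtain ⟨c, hc1, hc2⟩ := exists_between hkx
      have h1 := bdrySum_usc hD J k _ x
        (fun j ε hε => ih _ (Finset.erase_ssubset hk) j x ε hε) c hc1
      have h2 : ∀ᶠ p in 𝓝[{p : ℝ × (Fin N → ℝ) | p.1 ∈ Set.Icc 0 T}] (T, x), c < p.2 k := by
        apply Filter.Eventually.filter_mono nhdsWithin_le_nhds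
        have hcont : Continuous fun p : ℝ × (Fin N → ℝ) => p.2 k := by fun_prop
        exact hcont.continuousAt.eventually (lt_mem_nhds hc2)
      filter_upwards [h1, h2] with p hp1 hp2
      exact hp1.trans hp2
    by_cases h : ∀ k ∈ J, bdrySum N D v J k T x < x k
    · -- alive case
      have hall : ∀ᶠ p in 𝓝[{p : ℝ × (Fin N → ℝ) | p.1 ∈ Set.Icc 0 T}] (T, x),
          ∀ k ∈ J, bdrySum N D v J k p.1 p.2 < p.2 k :=
        (Finset.eventually_all J).2 fun k hk => hb x k hk (h k hk)
      rw [eventually_nhdsWithin_iff] at hall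
      obtain ⟨r, hr, hball⟩ := Metric.eventually_nhds_iff.1 hall
      obtain ⟨-, -, ⟨C, hC⟩, -, -, -, h7⟩ := (hv J).2.2 i hi
      have hKdom : ∀ y ∈ Metric.closedBall x (r / 2), ∀ k ∈ J, bdrySum N D v J k T y < y k := by
        intro y hy
        refine @hball (T, y) ?_ hTm
        rw [Prod.dist_eq, dist_self]
        have := Metric.mem_closedBall.1 hy
        exact max_lt hr (by linarith)
      have htend := h7 (Metric.closedBall x (r / 2)) (isCompact_closedBall _ _) (by
        rintro ⟨t, y⟩ ⟨ht, hy⟩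
        obtain rfl : t = T := ht
        exact ⟨hTm, hKdom y hy⟩)
      have hev := htend.eventually (gt_mem_nhds hε)
      rw [eventually_nhdsWithin_iff] at hev
      have hev2 : ∀ᶠ p in 𝓝 (T, x), p.1 ∈ Set.Iio T →
          sSup ((fun y => |v J i p.1 y - v J i T y|) '' Metric.closedBall x (r / 2)) < ε :=
        (continuous_fst.continuousAt (x := (T, x))).eventually hev
      have hev3 : ∀ᶠ p : ℝ × (Fin N → ℝ) in 𝓝 (T, x), p.2 ∈ Metric.closedBall x (r / 2) :=
        (continuous_snd.continuousAt (x := (T, x))).eventually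
          (Metric.closedBall_mem_nhds x (half_pos hr))
      filter_upwards [hstrip x, nhdsWithin_le_nhds hev2, nhdsWithin_le_nhds hev3]
        with p hp0 hp2 hp3
      rw [alive_eq hT hv J x h i hi, zero_add]
      have hz : ∀ y ∈ Metric.closedBall x (r / 2), v J i T y = 0 := fun y hy =>
        alive_eq hT hv J y (hKdom y hy) i hi
      rcases hp0.2.lt_or_eq with hlt | heq
      · refine lt_of_le_of_lt ?_ (hp2 hlt)
        refine le_trans ?_ (le_csSup ⟨C, ?_⟩ ⟨p.2, hp3, rfl⟩)
        · simp only
          rw [hz _ hp3, sub_zero]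
          exact le_abs_self _
        · rintro _ ⟨y, hy, rfl⟩
          simp only
          rw [hz _ hy, sub_zero]
          exact hC _ ⟨hp0.1, hlt⟩ y
      · rw [heq, hz _ hp3]
        exact hε
    · -- killed case: push the killed coordinate below zero
      push Not at h
      obtain ⟨l, hl, hlx⟩ := h
      let φ : (Fin N → ℝ) → (Fin N → ℝ) := fun y => Function.update y l (min (y l) 0 - 1)
      have hφc : Continuous φ := by
        refine continuous_id.update l ?_
        fun_prop
      have hφle : ∀ y j, φ y j ≤ y j := by
        intro y j
        by_cases hj : j = l
        · subst hj
          simp only [φ, Function.update_self]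
          linarith [min_le_left (y j) 0]
        · simp [φ, hj]
      have hφkill : ∀ t ∈ Set.Icc 0 T, ∀ y, φ y l ≤ bdrySum N D v J l t (φ y) := by
        intro t ht y
        have h0 : 0 ≤ bdrySum N D v J l t (φ y) :=
          Finset.sum_nonneg fun j _ => mul_nonneg (hD l j) (nonneg_all hT hv hm _ j t ht _)
        refine le_trans ?_ h0
        simp only [φ, Function.update_self]
        linarith [min_le_right (y l) 0]
      have hval : v J i T (φ x) = v J i T x := by
        rw [(order_T hT hD hv (φ x) J).2 l hl (hφkill T hTm x) i,
          (order_T hT hD hv x J).2 l hl hlx i]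
        refine (hv (J.erase l)).1 i T hTm _ _ fun j hj => ?_
        simp [φ, (Finset.mem_erase.1 hj).1]
      -- eventual statement at `(T, φ x)`
      have hE : ∀ᶠ p in 𝓝[{p : ℝ × (Fin N → ℝ) | p.1 ∈ Set.Icc 0 T}] (T, φ x),
          ∀ k ∈ J, bdrySum N D v J k p.1 p.2 < p.2 k ∨
            v (J.erase k) i p.1 p.2 < v J i T (φ x) + ε := by
        refine (Finset.eventually_all J).2 fun k hk => ?_
        by_cases hkx : bdrySum N D v J k T (φ x) < φ x k
        · filter_upwards [hb (φ x) k hk hkx] with p hp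
          exact Or.inl hp
        · rw [(order_T hT hD hv (φ x) J).2 k hk (not_lt.1 hkx) i]
          filter_upwards [ih _ (Finset.erase_ssubset hk) i (φ x) ε hε] with p hp
          exact Or.inr hp
      have hmap : Tendsto (fun p : ℝ × (Fin N → ℝ) => (p.1, φ p.2))
          (𝓝[{p : ℝ × (Fin N → ℝ) | p.1 ∈ Set.Icc 0 T}] (T, x))
          (𝓝[{p : ℝ × (Fin N → ℝ) | p.1 ∈ Set.Icc 0 T}] (T, φ x)) := by
        refine tendsto_nhdsWithin_iff.2 ⟨?_, hstrip x⟩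
        have hc : Continuous (fun p : ℝ × (Fin N → ℝ) => (p.1, φ p.2)) :=
          continuous_fst.prodMk (hφc.comp continuous_snd)
        exact (hc.tendsto (T, x)).mono_left nhdsWithin_le_nhds
      filter_upwards [hstrip x, hmap.eventually hE] with p hp0 hp
      obtain ⟨k, hk, hkx, he⟩ := kill_eq hv J p.1 hp0 (φ p.2) l hl (hφkill _ hp0 _)
      have h1 : v J i p.1 p.2 ≤ v J i p.1 (φ p.2) :=
        hm J i hi p.1 p.1 p.2 (φ p.2) hp0 hp0 le_rfl (fun j _ => hφle _ j)
      rw [← hval]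
      refine lt_of_le_of_lt h1 ?_
      rw [he]
      exact (hp k hk).resolve_left (not_lt.2 hkx)

end helpers

/-- for a classical solution the domain `𝒟^I v` is open in `[0,T]×ℝ^I`, and if the
solution is moreover nonincreasing then so is `𝒟^I_T v`. -/
theorem classicalSolution_domains_open
    (hT : 0 < T) (hσ : 0 < σ) (hD : ∀ i j, 0 ≤ D i j)
    (v : Finset (Fin N) → Fin N → ℝ → (Fin N → ℝ) → ℝ)
    (hv : IsClassicalSolution N T σ D v)
    (I : Finset (Fin N)) (hI : I.Nonempty) :
    (∃ U : Set (ℝ × (Fin N → ℝ)), IsOpen U ∧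
      dom N T D v I = U ∩ {p : ℝ × (Fin N → ℝ) | p.1 ∈ Set.Icc 0 T}) ∧
    (IsNonincreasingSol N T v →
      ∃ U : Set (ℝ × (Fin N → ℝ)), IsOpen U ∧
        domT N T D v I = U ∩ {p : ℝ × (Fin N → ℝ) | p.1 ∈ Set.Icc 0 T}) := by
  obtain ⟨i₀, hi₀⟩ := hI
  obtain ⟨⟨U, hU, hUd⟩, -⟩ := (hv I).2.2 i₀ hi₀
  have hlt : IsOpen {p : ℝ × (Fin N → ℝ) | p.1 < T} := isOpen_lt continuous_fst continuous_const
  refine ⟨⟨U ∩ {p | p.1 < T}, hU.inter hlt, ?_⟩, fun hm => ?_⟩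
  · rw [hUd]
    ext p
    simp only [Set.mem_inter_iff, Set.mem_setOf_eq, Set.mem_Ico, Set.mem_Icc]
    constructor
    · rintro ⟨h1, h2, h3⟩
      exact ⟨⟨h1, h3⟩, h2, h3.le⟩
    · rintro ⟨⟨h1, h2⟩, h3, h4⟩
      exact ⟨h1, h3, h2⟩
  · refine ⟨{p | ∀ᶠ q in 𝓝 p, q.1 ∈ Set.Icc 0 T → q ∈ domT N T D v I},
      isOpen_setOf_eventually_nhds, ?_⟩
    ext ⟨t, x⟩
    constructor
    · intro hp
      refine ⟨?_, hp.1⟩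
      rcases hp.1.2.lt_or_eq with h | h
      · have hmem : (t, x) ∈ dom N T D v I := ⟨hp, h⟩
        rw [hUd] at hmem
        filter_upwards [hU.mem_nhds hmem.1, hlt.mem_nhds h] with q hq1 hq2 hq3
        have : q ∈ dom N T D v I := by
          rw [hUd]
          exact ⟨hq1, hq3.1, hq2⟩
        exact this.1
      · simp only at h
        subst h
        have hall : ∀ᶠ p in 𝓝[{p : ℝ × (Fin N → ℝ) | p.1 ∈ Set.Icc 0 t}] (t, x),
            ∀ k ∈ I, bdrySum N D v I k p.1 p.2 < p.2 k := by
          refine (Finset.eventually_all I).2 fun k hk => ?_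
          obtain ⟨c, hc1, hc2⟩ := exists_between (hp.2 k hk)
          have h1 := bdrySum_usc hD I k _ x
            (fun j ε hε => usc_T hT hD hv hm (I.erase k) j x ε hε) c hc1
          have hcont : Continuous fun p : ℝ × (Fin N → ℝ) => p.2 k := by fun_prop
          have h2 : ∀ᶠ p in 𝓝 (t, x), c < p.2 k :=
            hcont.continuousAt.eventually (lt_mem_nhds hc2)
          filter_upwards [h1, nhdsWithin_le_nhds h2] with p hp1 hp2
          exact hp1.trans hp2
        rw [eventually_nhdsWithin_iff] at hall
        filter_upwards [hall] with q hq hq'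
        exact ⟨hq', hq hq'⟩
    · rintro ⟨h1, h2⟩
      exact (show ∀ᶠ q in 𝓝 (t, x), q.1 ∈ Set.Icc 0 T → q ∈ domT N T D v I from h1).self_of_nhds h2
end

section
/- Let v be a nonincreasing classical solution of the cascade of moving-boundary PDEs. Then for every t ∈ [0,T] and every nonempty I ⊆ [N], the topological boundary of the set {x ∈ ℝ^I : (t,x) ∈ 𝒟^I_T v} equals {y + r(y)𝟏 : y ∈ E_I}, where 𝟏 ∈ ℝ^I is the all-ones vector, E_I = {y ∈ ℝ^I : Σ_{i∈I} y_i = 0}, and r : E_I → ℝ, defined by r(y) = inf{s ∈ ℝ : (t, y + s𝟏) ∈ 𝒟^I_T v}, is 1-Lipschitz with respect to the maximum norm on ℝ^I. In particular, this boundary has vanishing Lebesgue measure in ℝ^I. -/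
open Set Filter
open scoped Topology

variable (N : ℕ) (T σ : ℝ) (D : Fin N → Fin N → ℝ)

/-- The parametrisation `r(y) = inf{s ∈ ℝ : (t, y + s·𝟏) ∈ 𝒟^I_T v}` of the boundary of the
time-`t` section of the domain, defined on the hyperplane `E_I = {y : Σ_{i∈I} y_i = 0}`. -/
noncomputable def bdryParam (v : Finset (Fin N) → Fin N → ℝ → (Fin N → ℝ) → ℝ)
    (I : Finset (Fin N)) (t : ℝ) (y : Fin N → ℝ) : ℝ :=
  sInf {s : ℝ |
    (t, y + s • (fun j => if j ∈ I then (1 : ℝ) else 0)) ∈ domT N T D v I}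

theorem bdrySum_anti_aux (hD : ∀ i j, 0 ≤ D i j)
    (v : Finset (Fin N) → Fin N → ℝ → (Fin N → ℝ) → ℝ)
    (hv : IsClassicalSolution N T σ D v) (hmono : IsNonincreasingSol N T v)
    (t : ℝ) (ht : t ∈ Set.Icc (0 : ℝ) T) (I : Finset (Fin N)) (i : Fin N)
    (x y : Fin N → ℝ) (hxy : ∀ j ∈ I, x j ≤ y j) :
    bdrySum N D v I i t y ≤ bdrySum N D v I i t x := by
  unfold bdrySum
  refine Finset.sum_le_sum fun j _ => mul_le_mul_of_nonneg_left ?_ (hD i j)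
  by_cases hj : j ∈ I.erase i
  · exact hmono _ j hj t t y x ht ht le_rfl fun k hk => hxy k (Finset.mem_of_mem_erase hk)
  · rw [(hv (I.erase i)).2.1 j hj t ht, (hv (I.erase i)).2.1 j hj t ht]

open MeasureTheory in
/-- the boundary of the time-`t` section of `𝒟^I_T v` is the graph
`{y + r(y)𝟏 : y ∈ E_I}` of the `1`-Lipschitz (for the maximum norm over the coordinates of `I`)
function `r`, and in particular it is Lebesgue-null. -/
theorem classicalSolution_boundary_lipschitz_graph
    (hT : 0 < T) (hσ : 0 < σ) (hD : ∀ i j, 0 ≤ D i j)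
    (v : Finset (Fin N) → Fin N → ℝ → (Fin N → ℝ) → ℝ)
    (hv : IsClassicalSolution N T σ D v) (hmono : IsNonincreasingSol N T v)
    (t : ℝ) (ht : t ∈ Set.Icc (0 : ℝ) T)
    (I : Finset (Fin N)) (hI : I.Nonempty) :
    frontier {x : Fin N → ℝ | (t, x) ∈ domT N T D v I} =
      (fun y : Fin N → ℝ =>
          y + bdryParam N T D v I t y • (fun j => if j ∈ I then (1 : ℝ) else 0)) ''
        {y : Fin N → ℝ | ∑ i ∈ I, y i = 0} ∧
    (∀ y₁ ∈ {y : Fin N → ℝ | ∑ i ∈ I, y i = 0},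
      ∀ y₂ ∈ {y : Fin N → ℝ | ∑ i ∈ I, y i = 0},
        |bdryParam N T D v I t y₁ - bdryParam N T D v I t y₂| ≤
          I.sup' hI fun i => |y₁ i - y₂ i|) ∧
    volume (frontier {x : Fin N → ℝ | (t, x) ∈ domT N T D v I}) = 0 := by
  set e : Fin N → ℝ := fun j => if j ∈ I then (1 : ℝ) else 0 with he
  have he1 : ∀ j ∈ I, e j = 1 := fun j hj => by simp [he, hj]
  set S : Set (Fin N → ℝ) := {x : Fin N → ℝ | (t, x) ∈ domT N T D v I} with hS
  have hanti := bdrySum_anti_aux N T σ D hD v hv hmono t ht I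
  have hup : ∀ x ∈ S, ∀ z : Fin N → ℝ, (∀ j ∈ I, x j ≤ z j) → z ∈ S := by
    intro x hx z hz
    refine ⟨ht, fun i hi => ?_⟩
    exact lt_of_le_of_lt (hanti i x z hz) (lt_of_lt_of_le (hx.2 i hi) (hz i hi))
  have hpt : ∀ (y : Fin N → ℝ) (s : ℝ), ∀ j ∈ I, (y + s • e) j = y j + s := by
    intro y s j hj
    simp [he1 j hj]
  have hr : ∀ y, bdryParam N T D v I t y = sInf {s : ℝ | y + s • e ∈ S} := fun y => rfl
  have hne : ∀ y : Fin N → ℝ, {s : ℝ | y + s • e ∈ S}.Nonempty := by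
    intro y
    obtain ⟨M, hM⟩ := (I.finite_toSet.image fun i => bdrySum N D v I i t y - y i).bddAbove
    refine ⟨max 0 (M + 1), ht, fun i hi => ?_⟩
    have h1 := hanti i y (y + max 0 (M + 1) • e) (fun j hj => by
      rw [hpt y _ j hj]; linarith [le_max_left 0 (M + 1)])
    have h2 : bdrySum N D v I i t y - y i ≤ M := hM ⟨i, hi, rfl⟩
    have h3 := hpt y (max 0 (M + 1)) i hi
    have h4 := le_max_right 0 (M + 1)
    show bdrySum N D v I i t (y + max 0 (M + 1) • e) < (y + max 0 (M + 1) • e) i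
    linarith
  have hbd : ∀ y : Fin N → ℝ, BddBelow {s : ℝ | y + s • e ∈ S} := by
    intro y
    obtain ⟨i, hi⟩ := hI
    refine ⟨min 0 (bdrySum N D v I i t y - y i), fun s hs => ?_⟩
    by_contra hlt
    push Not at hlt
    have hs0 : s < 0 := lt_of_lt_of_le hlt (min_le_left _ _)
    have hs1 : s < bdrySum N D v I i t y - y i := lt_of_lt_of_le hlt (min_le_right _ _)
    have h1 := hanti i (y + s • e) y (fun j hj => by rw [hpt y _ j hj]; linarith)
    have h2 : bdrySum N D v I i t (y + s • e) < (y + s • e) i := hs.2 i hi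
    rw [hpt y s i hi] at h2
    linarith
  -- membership above and below the graph
  have habove : ∀ (y : Fin N → ℝ) (s : ℝ), bdryParam N T D v I t y < s → y + s • e ∈ S := by
    intro y s hs
    rw [hr] at hs
    obtain ⟨s', hs', hlt⟩ := exists_lt_of_csInf_lt (hne y) hs
    exact hup _ hs' _ fun j hj => by rw [hpt y _ j hj, hpt y _ j hj]; linarith
  have hbelow : ∀ (y : Fin N → ℝ) (s : ℝ), s < bdryParam N T D v I t y → y + s • e ∉ S := by
    intro y s hs hmem
    rw [hr] at hs
    exact absurd (csInf_le (hbd y) hmem) (not_le.2 hs)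
  have hcont : ∀ y : Fin N → ℝ, Continuous fun s : ℝ => y + s • e := fun y => by fun_prop
  have hnear : ∀ (x : Fin N → ℝ) (ε : ℝ), 0 < ε →
      ∀ᶠ z in 𝓝 x, ∀ j, |z j - x j| < ε := by
    intro x ε hε
    filter_upwards [Metric.ball_mem_nhds x hε] with z hz j
    rw [← Real.dist_eq]
    exact lt_of_le_of_lt (dist_le_pi_dist z x j) hz
  refine ⟨?_, ?_, ?_⟩
  · ext x
    constructor
    · intro hx
      have hcard : (0 : ℝ) < I.card := by exact_mod_cast hI.card_pos
      set s : ℝ := (∑ i ∈ I, x i) / I.card with hs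
      set y : Fin N → ℝ := x - s • e with hy
      have hxy : x = y + s • e := by rw [hy]; abel
      refine ⟨y, ?_, ?_⟩
      · show ∑ i ∈ I, y i = 0
        have : ∑ i ∈ I, y i = ∑ i ∈ I, (x i - s) :=
          Finset.sum_congr rfl fun i hi => by simp [hy, he1 i hi]
        rw [this, Finset.sum_sub_distrib, Finset.sum_const, nsmul_eq_mul, hs,
          mul_div_cancel₀ _ hcard.ne', sub_self]
      · have hsr : s = bdryParam N T D v I t y := by
          rcases lt_trichotomy s (bdryParam N T D v I t y) with h | h | h
          · exfalso
            obtain ⟨s', h1, h2⟩ := exists_between h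
            have hf := mem_closure_iff_frequently.1 hx.1
            refine hf ?_
            filter_upwards [hnear x (s' - s) (by linarith)] with z hz hzS
            refine hbelow y s' h2 (hup z hzS _ fun j hj => ?_)
            have h3 := (abs_lt.1 (hz j)).2
            have h4 : x j = y j + s := by rw [← hpt y s j hj, ← hxy]
            rw [hpt y _ j hj]; linarith
          · exact h
          · exfalso
            obtain ⟨s', h1, h2⟩ := exists_between h
            refine hx.2 (mem_interior_iff_mem_nhds.2 ?_)
            filter_upwards [hnear x (s - s') (by linarith)] with z hz
            refine hup _ (habove y s' h1) z fun j hj => ?_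
            have h3 := (abs_lt.1 (hz j)).1
            have h4 : x j = y j + s := by rw [← hpt y s j hj, ← hxy]
            rw [hpt y _ j hj]; linarith
        show y + bdryParam N T D v I t y • e = x
        rw [← hsr, ← hxy]
    · rintro ⟨y, -, rfl⟩
      have htd := (hcont y).tendsto (bdryParam N T D v I t y)
      constructor
      · refine mem_closure_of_tendsto (htd.mono_left nhdsWithin_le_nhds)
          (b := 𝓝[>] (bdryParam N T D v I t y)) ?_
        filter_upwards [self_mem_nhdsWithin] with s hs using habove y s hs
      · intro hint
        have h1 := (htd.mono_left (nhdsWithin_le_nhds (s := Set.Iio (bdryParam N T D v I t y)))).eventually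
          (mem_interior_iff_mem_nhds.1 hint)
        have h2 : ∀ᶠ s in 𝓝[<] (bdryParam N T D v I t y), s < bdryParam N T D v I t y :=
          self_mem_nhdsWithin
        obtain ⟨s, hs1, hs2⟩ := (h1.and h2).exists
        exact hbelow y s hs2 hs1
  · have key : ∀ (y₁ y₂ : Fin N → ℝ) (M : ℝ), (∀ i ∈ I, |y₁ i - y₂ i| ≤ M) →
        bdryParam N T D v I t y₂ - M ≤ bdryParam N T D v I t y₁ := by
      intro y₁ y₂ M hM
      rw [hr y₁]
      refine le_csInf (hne y₁) fun s hs => ?_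
      have : y₂ + (s + M) • e ∈ S := hup _ hs _ fun j hj => by
        rw [hpt _ _ j hj, hpt _ _ j hj]
        linarith [(abs_le.1 (hM j hj)).2]
      have h2 := csInf_le (hbd y₂) this
      rw [← hr] at h2
      linarith
    intro y₁ _ y₂ _
    have hM : ∀ i ∈ I, |y₁ i - y₂ i| ≤ I.sup' hI fun i => |y₁ i - y₂ i| :=
      fun i hi => Finset.le_sup' (fun i => |y₁ i - y₂ i|) hi
    have h1 := key y₁ y₂ _ hM
    have h2 := key y₂ y₁ _ fun i hi => by rw [abs_sub_comm]; exact hM i hi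
    exact abs_le.2 ⟨by linarith, by linarith⟩
  · have hU : IsUpperSet S := fun x z hxz hx => hup x hx z fun j _ => hxz j
    exact hU.null_frontier
end
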